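/- The n-th prime number p_n satisfies p_n \sim n \ln n, i.e., lim_{n\to\infty} p_n/(n \ln n) = 1. -/

import Mathlib

open Filter

/-!
By Wiener's method. If `ψ` is Chebyshev's function, then `B u = ψ (e ^ u) e ^ (-u)` is bounded, and
the Laplace transform of `B - 1` is expressed by the logarithmic derivative of `ζ`; because `ζ` has
no zeros on the line `Re s = 1`, it extends continuously to the closed half-plane `0 ≤ Re z`. By
Parseval's formula and the Riemann-Lebesgue lemma, every average of `B - 1` against a translate of
`sinc (l v) ^ 2`, whose Fourier transform has compact support, tends to zero. Since `B u * e ^ u` is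
monotone, `B` cannot drop abruptly, and therefore `B - 1` itself tends to zero, that is, `ψ x ~ x`.
This gives `π x ~ x / log x`, which is inverted at `x = p_n`.
-/

namespace PrimeNumberTheorem

open MeasureTheory Set Topology Real
open scoped FourierTransform Convolution

section Fourier

lemma integrable_sinc_sq : Integrable (fun v ↦ sinc v ^ 2) := by
  refine (integrable_inv_one_add_sq.const_mul 2).mono' (by fun_prop) (.of_forall fun v ↦ ?_)
  have hv : v ^ 2 * sinc v ^ 2 ≤ 1 := by
    rcases eq_or_ne v 0 with rfl | hv
    · simp
    · rw [sinc_of_ne_zero hv, div_pow, mul_div_cancel₀ _ (by positivity)]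
      exact sin_sq_le_one v
  have hsinc : sinc v ^ 2 ≤ 1 := (sq_le_one_iff_abs_le_one _).2 (abs_sinc_le_one v)
  rw [norm_of_nonneg (sq_nonneg _), ← div_eq_mul_inv, le_div_iff₀ (by positivity)]
  linarith

lemma integral_sinc_sq_pos : 0 < ∫ v, sinc v ^ 2 :=
  integral_pos_of_integrable_nonneg_nonzero (x := 0) (by fun_prop) integrable_sinc_sq
    (fun _ ↦ sq_nonneg _) (by simp)

lemma fourier_indicator_Icc {r : ℝ} (hr : 0 ≤ r) (c : ℂ) (v : ℝ) :
    𝓕 ((Icc (-r) r).indicator fun _ ↦ c) v = 2 * r * sinc (2 * π * r * v) * c := by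
  have h : 𝓕 ((Icc (-r) r).indicator fun _ ↦ c) v =
      (∫ t in -r..r, Complex.exp ((-(2 * π * v) * t : ℝ) * Complex.I)) * c := by
    rw [fourier_real_eq_integral_exp_smul, intervalIntegral.integral_of_le (by linarith),
      ← integral_Icc_eq_integral_Ioc, ← integral_indicator measurableSet_Icc,
      ← integral_mul_const]
    congr 1 with t
    by_cases ht : t ∈ Icc (-r) r
    · simp only [ht, indicator_of_mem, smul_eq_mul]
      ring_nf
    · simp [ht]
  rw [h]
  congr 1
  rcases eq_or_ne v 0 with rfl | hv
  · simp [← two_mul]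
  · have hc : -(2 * π * v) ≠ 0 := by simp [hv, pi_ne_zero]
    rw [intervalIntegral.integral_comp_mul_left (fun t : ℝ ↦ Complex.exp (t * Complex.I)) hc,
      mul_neg, integral_exp_mul_I_eq_sinc, neg_mul, sinc_neg, mul_right_comm _ v, Complex.real_smul]
    have : (π : ℂ) ≠ 0 := by simp [pi_ne_zero]
    have : (v : ℂ) ≠ 0 := by simp [hv]
    push_cast
    field_simp

lemma exists_fourierInv_eq_sinc_sq {l : ℝ} (hl : 0 < l) :
    ∃ k : ℝ → ℂ, Integrable k ∧ HasCompactSupport k ∧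
      𝓕⁻ k = fun v ↦ ((sinc (l * v) ^ 2 : ℝ) : ℂ) := by
  set r := l / (2 * π) with hr
  set f : ℝ → ℂ := (Icc (-r) r).indicator fun _ ↦ (2 * r : ℂ)⁻¹
  have hr0 : 0 < r := by positivity
  have hf : Integrable f := (integrable_indicator_iff measurableSet_Icc).2
    (integrableOn_const (by simp))
  have hfs : HasCompactSupport f := HasCompactSupport.intro isCompact_Icc
    fun t ht ↦ indicator_of_notMem ht _
  refine ⟨f ⋆[.mul ℂ ℂ] f, hf.integrable_convolution _ hf, hfs.convolution _ hfs,
    funext fun v ↦ ?_⟩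
  have hlr : 2 * π * r = l := by rw [hr]; field_simp
  have hr' : (r : ℂ) ≠ 0 := by simp [hr0.ne']
  rw [fourierInv_eq_fourier_neg, fourier_mul_convolution_eq hf hf, fourier_indicator_Icc hr0.le,
    hlr, mul_neg, sinc_neg]
  push_cast
  field_simp

variable {V : Type*} [NormedAddCommGroup V] [InnerProductSpace ℝ V] [FiniteDimensional ℝ V]
  [MeasurableSpace V] [BorelSpace V]

lemma integral_mul_fourierInv_sub {H k : V → ℂ} (hH : Integrable H) (hk : Integrable k) (x : V) :
    ∫ u, H u * 𝓕⁻ k (x - u) = 𝓕⁻ (fun t ↦ 𝓕 H t * k t : V → ℂ) x := by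
  set kx : V → ℂ := fun t ↦ 𝐞 (inner ℝ t x) • k t with hkx_def
  have hshift (u : V) : 𝓕⁻ k (x - u) = 𝓕 kx u := by
    simp only [Real.fourier_eq, Real.fourierInv_eq, hkx_def, smul_smul, ← AddChar.map_add_eq_mul,
      inner_sub_right, neg_add_eq_sub]
  have hkx : Integrable kx := by
    simpa [hkx_def] using (Real.fourierIntegral_convergent_iff (-x)).2 hk
  have hmul := VectorFourier.integral_fourierIntegral_smul_eq_flip (L := innerₗ V) (μ := volume)
    (ν := volume) continuous_fourierChar (by exact continuous_inner) hH hkx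
  rw [flip_innerₗ] at hmul
  simp only [smul_eq_mul] at hmul
  change ∫ t, 𝓕 H t * kx t = ∫ u, H u * 𝓕 kx u at hmul
  simp_rw [hshift]
  rw [← hmul, Real.fourierInv_eq]
  congr 1 with t
  simp only [hkx_def, Circle.smul_def, smul_eq_mul]
  ring

end Fourier

section Laplace

variable {h : ℝ → ℂ} {k : ℝ → ℂ} {g : ℂ → ℂ} {C : ℝ}

lemma integrable_mul_exp_neg (hm : AEStronglyMeasurable h) (hC : ∀ u, ‖h u‖ ≤ C)
    {z : ℂ} (hz : 0 < z.re) : IntegrableOn (fun u : ℝ ↦ h u * Complex.exp (-z * u)) (Ioi 0) :=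
  Integrable.bdd_mul (integrableOn_exp_mul_complex_Ioi (by simpa using hz) 0) hm.restrict
    (.of_forall hC)

lemma integral_mul_exp_neg_mul_fourierInv_sub (hm : AEStronglyMeasurable h)
    (hC : ∀ u, ‖h u‖ ≤ C) (hk : Integrable k)
    (hlap : ∀ z : ℂ, 0 < z.re → ∫ u in Ioi (0 : ℝ), h u * Complex.exp (-z * u) = g z)
    {σ : ℝ} (hσ : 0 < σ) (x : ℝ) :
    ∫ u in Ioi (0 : ℝ), h u * Complex.exp (-σ * u) * 𝓕⁻ k (x - u) =
      𝓕⁻ (fun t ↦ g (σ + 2 * π * t * Complex.I) * k t : ℝ → ℂ) x := by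
  set H : ℝ → ℂ := (Ioi 0).indicator fun u ↦ h u * Complex.exp (-σ * u) with hH_def
  have hH : Integrable H := (integrable_indicator_iff measurableSet_Ioi).2
    (integrable_mul_exp_neg hm hC (by simpa using hσ))
  have hHg (t : ℝ) : 𝓕 H t = g (σ + 2 * π * t * Complex.I) := by
    rw [fourier_real_eq_integral_exp_smul, ← hlap _ (by simpa using hσ),
      ← integral_indicator measurableSet_Ioi]
    congr 1 with u
    by_cases hu : u ∈ Ioi (0 : ℝ)
    · simp only [hH_def, hu, indicator_of_mem, smul_eq_mul]
      rw [mul_left_comm, ← Complex.exp_add]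
      push_cast
      ring_nf
    · simp [hH_def, hu]
  simp_rw [← hHg, ← integral_mul_fourierInv_sub hH hk x, ← integral_indicator measurableSet_Ioi,
    hH_def, indicator_mul_left]

lemma tendsto_integral_mul_exp_neg_mul {φ : ℝ → ℂ} (hm : AEStronglyMeasurable h)
    (hC : ∀ u, ‖h u‖ ≤ C) (hφ : Integrable φ) :
    Tendsto (fun σ : ℝ ↦ ∫ u in Ioi (0 : ℝ), h u * Complex.exp (-σ * u) * φ u) (𝓝[>] 0)
      (𝓝 (∫ u in Ioi (0 : ℝ), h u * φ u)) := by
  refine tendsto_integral_filter_of_dominated_convergence (fun u ↦ C * ‖φ u‖)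
    (.of_forall fun σ ↦ ?_) ?_ (hφ.norm.const_mul C).integrableOn (.of_forall fun u ↦ ?_)
  · exact ((hm.mul (by fun_prop)).mul hφ.1).restrict
  · filter_upwards [self_mem_nhdsWithin] with σ (hσ : 0 < σ)
    refine (ae_restrict_iff' measurableSet_Ioi).2 (.of_forall fun u (hu : 0 < u) ↦ ?_)
    have hexp : ‖Complex.exp (-σ * u)‖ ≤ 1 := by
      simp [Complex.norm_exp, hσ.le, hu.le, mul_nonneg]
    rw [norm_mul, norm_mul]
    gcongr
    simpa using mul_le_mul (hC u) hexp (norm_nonneg _) ((norm_nonneg _).trans (hC u))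
  · have hcont : Continuous fun σ : ℝ ↦ h u * Complex.exp (-σ * u) * φ u := by fun_prop
    simpa using (hcont.tendsto 0).mono_left nhdsWithin_le_nhds

lemma tendsto_fourierInv_vertical (hg : ContinuousOn g {z | 0 ≤ z.re}) (hk : Integrable k)
    (hks : HasCompactSupport k) (x : ℝ) :
    Tendsto (fun σ : ℝ ↦ 𝓕⁻ (fun t ↦ g (σ + 2 * π * t * Complex.I) * k t : ℝ → ℂ) x) (𝓝[>] 0)
      (𝓝 (𝓕⁻ (fun t ↦ g (2 * π * t * Complex.I) * k t : ℝ → ℂ) x)) := by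
  set line : ℝ × ℝ → ℂ := fun p ↦ p.1 + 2 * π * p.2 * Complex.I
  have hcont : ContinuousOn (g ∘ line) {p | 0 ≤ p.1} :=
    hg.comp (by fun_prop) fun p (hp : 0 ≤ p.1) ↦ by simpa [line] using hp
  obtain ⟨M, hM⟩ := (isCompact_Icc.prod hks.isCompact).exists_bound_of_continuousOn
    (hcont.mono fun p (hp : p ∈ Icc 0 1 ×ˢ tsupport k) ↦ hp.1.1)
  simp_rw [Real.fourierInv_eq]
  refine tendsto_integral_filter_of_dominated_convergence (fun t ↦ M * ‖k t‖) ?_ ?_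
    (hk.norm.const_mul M) (.of_forall fun t ↦ ?_)
  · filter_upwards [self_mem_nhdsWithin] with σ (hσ : 0 < σ)
    have : Continuous fun t : ℝ ↦ g (line (σ, t)) :=
      hcont.comp_continuous (by fun_prop) fun _ ↦ hσ.le
    exact (Continuous.aestronglyMeasurable (by fun_prop)).smul (this.aestronglyMeasurable.mul hk.1)
  · filter_upwards [Ioc_mem_nhdsGT one_pos] with σ hσ
    refine .of_forall fun t ↦ ?_
    rw [Circle.norm_smul, norm_mul]
    by_cases ht : t ∈ tsupport k
    · gcongr
      exact hM (σ, t) ⟨Ioc_subset_Icc_self hσ, ht⟩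
    · simp [image_eq_zero_of_notMem_tsupport ht]
  · have hlim : Tendsto (fun σ : ℝ ↦ g (line (σ, t))) (𝓝[>] 0) (𝓝 (g (line (0, t)))) := by
      refine (hcont (0, t) (mem_ofPred.2 le_rfl)).tendsto.comp (tendsto_nhdsWithin_iff.2 ⟨?_, ?_⟩)
      · exact (Continuous.tendsto' (by fun_prop) _ _ rfl).mono_left nhdsWithin_le_nhds
      · filter_upwards [self_mem_nhdsWithin] with σ (hσ : 0 < σ) using hσ.le
    simpa [line] using (hlim.mul_const (k t)).const_smul (𝐞 (inner ℝ t x))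

lemma integral_mul_fourierInv_sub_eq_boundary (hm : AEStronglyMeasurable h) (hC : ∀ u, ‖h u‖ ≤ C)
    (hg : ContinuousOn g {z | 0 ≤ z.re})
    (hlap : ∀ z : ℂ, 0 < z.re → ∫ u in Ioi (0 : ℝ), h u * Complex.exp (-z * u) = g z)
    (hk : Integrable k) (hks : HasCompactSupport k) (hk' : Integrable (𝓕⁻ k)) (x : ℝ) :
    ∫ u in Ioi (0 : ℝ), h u * 𝓕⁻ k (x - u) =
      𝓕⁻ (fun t ↦ g (2 * π * t * Complex.I) * k t : ℝ → ℂ) x := by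
  refine tendsto_nhds_unique ((tendsto_integral_mul_exp_neg_mul hm hC (hk'.comp_sub_left x)).congr'
    ?_) (tendsto_fourierInv_vertical hg hk hks x)
  filter_upwards [self_mem_nhdsWithin] with σ hσ
  exact integral_mul_exp_neg_mul_fourierInv_sub hm hC hk hlap hσ x

lemma tendsto_integral_mul_fourierInv_sub (hm : AEStronglyMeasurable h) (hC : ∀ u, ‖h u‖ ≤ C)
    (hg : ContinuousOn g {z | 0 ≤ z.re})
    (hlap : ∀ z : ℂ, 0 < z.re → ∫ u in Ioi (0 : ℝ), h u * Complex.exp (-z * u) = g z)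
    (hk : Integrable k) (hks : HasCompactSupport k) (hk' : Integrable (𝓕⁻ k)) :
    Tendsto (fun x ↦ ∫ u in Ioi (0 : ℝ), h u * 𝓕⁻ k (x - u)) atTop (𝓝 0) := by
  simp_rw [integral_mul_fourierInv_sub_eq_boundary hm hC hg hlap hk hks hk',
    fourierInv_eq_fourier_neg]
  exact (Real.zero_at_infty_fourier _).comp
    (tendsto_neg_atTop_atBot.mono_right atBot_le_cocompact)

end Laplace

section Tauberian

/-- A real function on the line is slowly decreasing (in the sense of Schmidt) if, far enough out,
it drops by an arbitrarily small amount on all intervals of a suitable fixed length. -/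
def SlowlyDecreasing (h : ℝ → ℝ) : Prop :=
  ∀ ε > 0, ∃ δ > 0, ∀ᶠ x in atTop, ∀ u ∈ Icc x (x + δ), h x - ε ≤ h u

lemma SlowlyDecreasing.sub_const {h : ℝ → ℝ} (hh : SlowlyDecreasing h) (A : ℝ) :
    SlowlyDecreasing fun u ↦ h u - A := by
  intro ε hε
  obtain ⟨δ, hδ, hev⟩ := hh ε hε
  refine ⟨δ, hδ, hev.mono fun x hx u hu ↦ ?_⟩
  linarith [hx u hu]

lemma slowlyDecreasing_of_monotone_mul_exp {h : ℝ → ℝ} {C : ℝ} (h0 : ∀ u, 0 ≤ h u)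
    (hC : ∀ u, h u ≤ C) (hmono : Monotone fun u ↦ h u * exp u) : SlowlyDecreasing h := by
  intro ε hε
  have hC1 : 0 < C + 1 := by linarith [h0 0, hC 0]
  refine ⟨ε / (C + 1), by positivity, .of_forall fun x u hu ↦ ?_⟩
  have hxu : 0 ≤ u - x := sub_nonneg.2 hu.1
  have hdrop : h x * (u - x) ≤ ε := calc
    h x * (u - x) ≤ (C + 1) * (ε / (C + 1)) := by
      gcongr
      · linarith [hC x]
      · linarith [hu.2]
    _ = ε := mul_div_cancel₀ _ hC1.ne'
  calc
    h x - ε ≤ h x * (x - u + 1) := by linarith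
    _ ≤ h x * exp (x - u) := by gcongr; exacts [h0 x, add_one_le_exp _]
    _ = h x * exp x * exp (-u) := by rw [sub_eq_add_neg, exp_add, mul_assoc]
    _ ≤ h u * exp u * exp (-u) := by exact mul_le_mul_of_nonneg_right (hmono hu.1) (exp_pos _).le
    _ = h u := by rw [mul_assoc, ← exp_add, add_neg_cancel, exp_zero, mul_one]

lemma mul_setIntegral_sub_mul_setIntegral_compl_le {α : Type*} [MeasurableSpace α] {μ : Measure α}
    {h φ : α → ℝ} {c C : ℝ} {s t : Set α} (hm : AEStronglyMeasurable h μ) (hC : ∀ u, |h u| ≤ C)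
    (hφ : Integrable φ μ) (hφ0 : ∀ u, 0 ≤ φ u) (hs : MeasurableSet s) (ht : MeasurableSet t)
    (hst : s ⊆ t) (hc : ∀ u ∈ s, c ≤ h u) :
    c * ∫ u in s, φ u ∂μ - C * ∫ u in sᶜ, φ u ∂μ ≤ ∫ u in t, h u * φ u ∂μ := by
  have hhφ : Integrable (fun u ↦ h u * φ u) μ := hφ.bdd_mul hm (.of_forall hC)
  rw [← integral_const_mul, ← integral_const_mul, ← integral_indicator hs,
    ← integral_indicator hs.compl, ← integral_indicator ht, ← integral_sub]
  · refine integral_mono (((hφ.const_mul c).indicator hs).sub ((hφ.const_mul C).indicator hs.compl))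
      (hhφ.indicator ht) fun u ↦ ?_
    have hlow : -C * φ u ≤ h u * φ u :=
      mul_le_mul_of_nonneg_right (abs_le.1 (hC u)).1 (hφ0 u)
    have hCφ : 0 ≤ C * φ u := mul_nonneg ((abs_nonneg _).trans (hC u)) (hφ0 u)
    by_cases hus : u ∈ s
    · simpa [hus, hst hus] using mul_le_mul_of_nonneg_right (hc u hus) (hφ0 u)
    · by_cases hut : u ∈ t
      · simpa [hus, hut] using hlow
      · simpa [hus, hut] using hCφ
  · exact (hφ.const_mul c).indicator hs
  · exact (hφ.const_mul C).indicator hs.compl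

lemma setIntegral_preimage_const_sub {G E : Type*} [AddGroup G] [MeasurableSpace G]
    [MeasurableAdd G] [MeasurableNeg G] {μ : Measure G} [μ.IsAddLeftInvariant] [μ.IsNegInvariant]
    [NormedAddCommGroup E] [NormedSpace ℝ E] (φ : G → E) (s : Set G) (x : G) :
    ∫ u in (x - ·) ⁻¹' s, φ (x - u) ∂μ = ∫ v in s, φ v ∂μ :=
  (Measure.measurePreserving_sub_left μ x).setIntegral_preimage_emb
    (MeasurableEquiv.subLeft x).measurableEmbedding φ s

variable {K : ℝ → ℝ} {a : ℝ}

lemma setIntegral_Icc_neg_comp_mul_left {l : ℝ} (hl : 0 < l) (ha : 0 ≤ a) :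
    ∫ v in Icc (-a) a, K (l * v) = l⁻¹ * ∫ v in -(l * a)..l * a, K v := by
  rw [integral_Icc_eq_integral_Ioc, ← intervalIntegral.integral_of_le (by linarith),
    intervalIntegral.integral_comp_mul_left _ hl.ne', smul_eq_mul, mul_neg]

lemma exists_scale_setIntegral_compl_le (hK : Integrable K) (hK0 : 0 < ∫ v, K v) (ha : 0 < a)
    {η : ℝ} (hη : 0 < η) :
    ∃ l > 0, 0 < ∫ v in Icc (-a) a, K (l * v) ∧
      ∫ v in (Icc (-a) a)ᶜ, K (l * v) ≤ η * ∫ v in Icc (-a) a, K (l * v) := by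
  have hla : Tendsto (fun l ↦ l * a) atTop atTop := tendsto_id.atTop_mul_const ha
  have hW : Tendsto (fun l ↦ ∫ v in -(l * a)..l * a, K v) atTop (𝓝 (∫ v, K v)) :=
    intervalIntegral_tendsto_integral hK (tendsto_neg_atTop_atBot.comp hla) hla
  obtain ⟨l, hpos, hle, hl⟩ := ((hW.eventually_const_lt hK0).and
    (((hW.const_mul (1 + η)).eventually_const_lt
      (show ∫ v, K v < (1 + η) * ∫ v, K v by nlinarith)).and (eventually_gt_atTop 0))).exists
  refine ⟨l, hl, ?_, ?_⟩
  · rw [setIntegral_Icc_neg_comp_mul_left hl ha.le]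
    positivity
  · have hl' := inv_pos.2 hl
    rw [setIntegral_compl measurableSet_Icc (hK.comp_mul_left' hl.ne'),
      Measure.integral_comp_mul_left, abs_of_pos hl', smul_eq_mul,
      setIntegral_Icc_neg_comp_mul_left hl ha.le]
    nlinarith

variable {h : ℝ → ℝ} {C : ℝ}

lemma eventually_exists_mem_Icc_lt (hK : Integrable K) (hK0 : ∀ v, 0 ≤ K v) (hKpos : 0 < ∫ v, K v)
    (hm : AEStronglyMeasurable h) (hC : ∀ u, |h u| ≤ C)
    (havg : ∀ l > 0, Tendsto (fun x ↦ ∫ u in Ioi 0, h u * K (l * (x - u))) atTop (𝓝 0))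
    {ε : ℝ} (ha : 0 < a) (hε : 0 < ε) :
    ∀ᶠ x in atTop, ∃ u ∈ Icc (x - a) (x + a), h u < ε := by
  -- If the kernel has mass `W` on the window and mass at most `ε / (C + 1) * W` off it, then
  -- `ε ≤ h` on the window makes the average at least `ε * W - C * (ε / (C + 1) * W)`, which is
  -- `ε / (C + 1) * W`.
  have hC0 : 0 ≤ C := (abs_nonneg _).trans (hC 0)
  obtain ⟨l, hl, hWpos, hW⟩ := exists_scale_setIntegral_compl_le hK hKpos ha
    (show 0 < ε / (C + 1) by positivity)
  set W := ∫ v in Icc (-a) a, K (l * v)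
  filter_upwards [(havg l hl).eventually_lt_const (show 0 < ε / (C + 1) * W by positivity),
    eventually_gt_atTop a] with x hx hxa
  by_contra! hge
  have hwindow : (x - ·) ⁻¹' Icc (-a) a = Icc (x - a) (x + a) := by simp
  have hlow := mul_setIntegral_sub_mul_setIntegral_compl_le (t := Ioi 0)
    (φ := fun u ↦ K (l * (x - u))) hm hC ((hK.comp_mul_left' hl.ne').comp_sub_left x)
    (fun _ ↦ hK0 _) (measurableSet_Icc.preimage (by fun_prop)) measurableSet_Ioi
    (hwindow ▸ fun u hu ↦ (sub_pos.2 hxa).trans_le hu.1) (hwindow ▸ hge)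
  rw [← preimage_compl, setIntegral_preimage_const_sub fun v ↦ K (l * v),
    setIntegral_preimage_const_sub fun v ↦ K (l * v)] at hlow
  have hsplit : ε / (C + 1) * W = ε * W - C * (ε / (C + 1) * W) := by field_simp; ring
  linarith [mul_le_mul_of_nonneg_left hW hC0]

lemma SlowlyDecreasing.tendsto_zero (hh : SlowlyDecreasing h) (hK : Integrable K)
    (hK0 : ∀ v, 0 ≤ K v) (hKpos : 0 < ∫ v, K v) (hm : AEStronglyMeasurable h)
    (hC : ∀ u, |h u| ≤ C)
    (havg : ∀ l > 0, Tendsto (fun x ↦ ∫ u in Ioi 0, h u * K (l * (x - u))) atTop (𝓝 0)) :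
    Tendsto h atTop (𝓝 0) := by
  have hneg : ∀ l > 0,
      Tendsto (fun x ↦ ∫ u in Ioi 0, (-h) u * K (l * (x - u))) atTop (𝓝 0) := fun l hl ↦ by
    simpa [integral_neg] using (havg l hl).neg
  rw [Metric.tendsto_nhds]
  intro ε hε
  -- A point to the right of `x` where `h` is small bounds `h x` above, and a point to the left of
  -- `x` where `-h` is small bounds it below.
  obtain ⟨δ, hδ, hev⟩ := hh (ε / 2) (half_pos hε)
  have hup := eventually_exists_mem_Icc_lt hK hK0 hKpos hm hC havg (half_pos hδ) (half_pos hε)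
  have hlo := eventually_exists_mem_Icc_lt hK hK0 hKpos hm.neg (C := C) (by simpa using hC) hneg
    (half_pos hδ) (half_pos hε)
  filter_upwards [hev, (tendsto_atTop_add_const_right _ (δ / 2) tendsto_id).eventually hup,
    (tendsto_atTop_add_const_right _ (-(δ / 2)) tendsto_id).eventually hlo,
    (tendsto_atTop_add_const_right _ (-δ) tendsto_id).eventually (eventually_forall_ge_atTop.2 hev)]
    with x hx ⟨u, hu, hux⟩ ⟨w, hw, hwx⟩ hev'
  simp only [id_eq, mem_Icc, Pi.neg_apply] at hu hw hwx hev'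
  have hupper := hx u ⟨by linarith, by linarith⟩
  have hlower := hev' w (by linarith) x ⟨by linarith, by linarith⟩
  rw [dist_zero_right, norm_eq_abs, abs_lt]
  constructor <;> linarith


lemma SlowlyDecreasing.tendsto_zero_of_laplace {g : ℂ → ℂ} (hh : SlowlyDecreasing h)
    (hm : AEStronglyMeasurable h) (hC : ∀ u, |h u| ≤ C)
    (hg : ContinuousOn g {z | 0 ≤ z.re})
    (hlap : ∀ z : ℂ, 0 < z.re → ∫ u in Ioi (0 : ℝ), (h u : ℂ) * Complex.exp (-z * u) = g z) :
    Tendsto h atTop (𝓝 0) := by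
  refine hh.tendsto_zero integrable_sinc_sq (fun _ ↦ sq_nonneg _) integral_sinc_sq_pos hm hC
    fun l hl ↦ ?_
  obtain ⟨k, hk, hks, hkl⟩ := exists_fourierInv_eq_sinc_sq hl
  have hk' : Integrable (𝓕⁻ k) := by
    rw [hkl]
    exact (integrable_sinc_sq.comp_mul_left' hl.ne').ofReal
  have hav := tendsto_integral_mul_fourierInv_sub (h := fun u ↦ (h u : ℂ))
    (Complex.continuous_ofReal.comp_aestronglyMeasurable hm) (by simpa using hC) hg hlap hk hks hk'
  rw [← tendsto_ofReal_iff]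
  simpa [hkl, ← integral_complex_ofReal] using hav

end Tauberian

section WienerIkehara

lemma integral_Ioi_one_mul_cpow (S : ℝ → ℂ) (s : ℂ) :
    ∫ t in Ioi (1 : ℝ), S t * t ^ (-(s + 1)) =
      ∫ u in Ioi (0 : ℝ), S (exp u) * exp (-u) * Complex.exp (-(s - 1) * u) := by
  rw [← exp_zero, ← image_exp_Ioi, integral_image_eq_integral_abs_deriv_smul measurableSet_Ioi
    (fun u _ ↦ (hasDerivAt_exp u).hasDerivWithinAt) exp_injective.injOn]
  congr 1 with u
  have hu : (u : ℂ) = Complex.log (exp u : ℝ) := by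
    rw [← Complex.ofReal_log (exp_pos u).le, log_exp]
  rw [abs_of_pos (exp_pos u), Complex.real_smul,
    Complex.cpow_def_of_ne_zero (by exact_mod_cast (exp_pos u).ne'), ← hu]
  push_cast
  rw [mul_left_comm, mul_assoc, ← Complex.exp_add, ← Complex.exp_add]
  ring_nf

lemma integral_sub_const_mul_exp_neg {h : ℝ → ℂ} {C : ℝ} (hm : AEStronglyMeasurable h)
    (hC : ∀ u, ‖h u‖ ≤ C) (A : ℂ) {z : ℂ} (hz : 0 < z.re) :
    ∫ u in Ioi (0 : ℝ), (h u - A) * Complex.exp (-z * u) =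
      (∫ u in Ioi (0 : ℝ), h u * Complex.exp (-z * u)) - A / z := by
  have hz' : (-z).re < 0 := by simpa using hz
  simp_rw [sub_mul]
  rw [integral_sub (integrable_mul_exp_neg hm hC hz)
    ((integrableOn_exp_mul_complex_Ioi hz' 0).const_mul A), integral_const_mul,
    integral_exp_mul_complex_Ioi hz']
  simp [div_eq_mul_inv]

lemma one_add_ne_zero_of_re_nonneg {z : ℂ} (hz : 0 ≤ z.re) : 1 + z ≠ 0 := fun h ↦ by
  have := congrArg Complex.re h
  simp only [Complex.add_re, Complex.one_re, Complex.zero_re] at this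
  linarith

lemma integral_comp_exp_mul_exp_neg_sub_mul_exp_neg {S : ℝ → ℂ} {C : ℝ} (hm : Measurable S)
    (hC : ∀ u, ‖S (exp u) * exp (-u)‖ ≤ C) {A w z : ℂ} (hz : 0 < z.re)
    (hS : (1 + z) * ∫ t in Ioi (1 : ℝ), S t * t ^ (-(1 + z + 1)) = w + A / z) :
    ∫ u in Ioi (0 : ℝ), (S (exp u) * exp (-u) - A) * Complex.exp (-z * u) =
      (w - A) / (1 + z) := by
  have hz0 : z ≠ 0 := by rintro rfl; simp at hz
  rw [integral_Ioi_one_mul_cpow, add_sub_cancel_left] at hS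
  have hBm : Measurable fun u : ℝ ↦ S (exp u) * exp (-u) :=
    (hm.comp measurable_exp).mul (by fun_prop)
  rw [integral_sub_const_mul_exp_neg hBm.aestronglyMeasurable hC A hz,
    eq_div_iff (one_add_ne_zero_of_re_nonneg hz.le), sub_mul, mul_comm (∫ _ in _, _), hS]
  field_simp
  ring

theorem tendsto_div_of_mellin {S : ℝ → ℝ} {C A : ℝ} {G : ℂ → ℂ} (hmono : Monotone S)
    (h0 : ∀ x, 0 ≤ S x) (hC : ∀ x, 0 ≤ x → S x ≤ C * x) (hG : ContinuousOn G {s | 1 ≤ s.re})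
    (hS : ∀ s : ℂ, 1 < s.re →
      s * ∫ t in Ioi (1 : ℝ), (S t : ℂ) * t ^ (-(s + 1)) = G s + A / (s - 1)) :
    Tendsto (fun x ↦ S x / x) atTop (𝓝 A) := by
  set B : ℝ → ℝ := fun u ↦ S (exp u) * exp (-u) with hB
  have hBm : Measurable B := (hmono.measurable.comp measurable_exp).mul (by fun_prop)
  have hB0 (u : ℝ) : 0 ≤ B u := mul_nonneg (h0 _) (exp_pos _).le
  have hBC (u : ℝ) : B u ≤ C := by
    simpa [hB, exp_neg, ← div_eq_mul_inv, div_le_iff₀ (exp_pos u)] using hC _ (exp_pos u).le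
  have hslow : SlowlyDecreasing B := slowlyDecreasing_of_monotone_mul_exp hB0 hBC <| by
    simpa [hB, mul_assoc, ← exp_add, Function.comp_def] using hmono.comp exp_monotone
  have hlap (z : ℂ) (hz : 0 < z.re) :
      ∫ u in Ioi (0 : ℝ), ((B u - A : ℝ) : ℂ) * Complex.exp (-z * u) =
        (G (1 + z) - A) / (1 + z) := by
    have hbound (u : ℝ) : ‖(S (exp u) : ℂ) * exp (-u)‖ ≤ C := by
      rw [← Complex.ofReal_mul, Complex.norm_of_nonneg (hB0 u)]
      exact hBC u
    simpa [hB] using integral_comp_exp_mul_exp_neg_sub_mul_exp_neg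
      (Complex.measurable_ofReal.comp hmono.measurable) hbound hz
      (by simpa using hS (1 + z) (by simpa using hz))
  have hcont : ContinuousOn (fun z ↦ (G (1 + z) - A) / (1 + z)) {z : ℂ | 0 ≤ z.re} := by
    refine ((hG.comp (by fun_prop) fun z hz ↦ ?_).sub continuousOn_const).div (by fun_prop)
      fun z hz ↦ one_add_ne_zero_of_re_nonneg hz
    simpa using hz
  have hzero := (hslow.sub_const A).tendsto_zero_of_laplace (by fun_prop)
    (fun u ↦ (abs_sub _ _).trans (by grw [abs_of_nonneg (hB0 u), hBC u])) hcont hlap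
  refine ((tendsto_sub_nhds_zero_iff.1 hzero).comp tendsto_log_atTop).congr' ?_
  filter_upwards [eventually_gt_atTop 0] with x hx
  simp [hB, exp_neg, exp_log hx, div_eq_mul_inv]

theorem tendsto_sum_div_of_LSeries {f : ℕ → ℝ} {C A : ℝ} {G : ℂ → ℂ} (hf : ∀ n, 0 ≤ f n)
    (hC : ∀ n : ℕ, ∑ k ∈ Finset.Icc 1 n, f k ≤ C * n) (hG : ContinuousOn G {s | 1 ≤ s.re})
    (hL : ∀ s : ℂ, 1 < s.re → LSeries (fun n ↦ f n) s = G s + A / (s - 1)) :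
    Tendsto (fun x : ℝ ↦ (∑ k ∈ Finset.Icc 1 ⌊x⌋₊, f k) / x) atTop (𝓝 A) := by
  have hC0 : 0 ≤ C := by simpa using (hf 1).trans (by simpa using hC 1)
  have hO : (fun n : ℕ ↦ ∑ k ∈ Finset.Icc 1 n, f k) =O[atTop] fun n ↦ (n : ℝ) ^ (1 : ℝ) :=
    .of_bound C <| .of_forall fun n ↦ by
      simpa [abs_of_nonneg (Finset.sum_nonneg fun k _ ↦ hf k)] using hC n
  refine tendsto_div_of_mellin (C := C) (fun x y hxy ↦ ?_)
    (fun x ↦ Finset.sum_nonneg fun k _ ↦ hf k) (fun x hx ↦ ?_) hG fun s hs ↦ ?_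
  · exact Finset.sum_le_sum_of_subset_of_nonneg
      (Finset.Icc_subset_Icc_right (Nat.floor_mono hxy)) fun k _ _ ↦ hf k
  · exact (hC _).trans (mul_le_mul_of_nonneg_left (Nat.floor_le hx) hC0)
  · push_cast
    rw [← hL s hs, LSeries_eq_mul_integral_of_nonneg f zero_le_one hs hO hf]

end WienerIkehara

section Primes

open Asymptotics Chebyshev
open ArithmeticFunction (vonMangoldt)

theorem tendsto_sum_residueClass_div {q : ℕ} [NeZero q] {a : ZMod q} (ha : IsUnit a) :
    Tendsto (fun x : ℝ ↦ (∑ k ∈ Finset.Icc 1 ⌊x⌋₊, vonMangoldt.residueClass a k) / x) atTop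
      (𝓝 (q.totient : ℝ)⁻¹) := by
  refine tendsto_sum_div_of_LSeries (C := log 4 + 4) (vonMangoldt.residueClass_nonneg a)
    (fun n ↦ ?_) (vonMangoldt.continuousOn_LFunctionResidueClassAux a) fun s hs ↦ ?_
  · calc
      _ ≤ ψ n := by
        rw [psi, Nat.floor_natCast, ← Finset.Icc_add_one_left_eq_Ioc]
        exact Finset.sum_le_sum fun k _ ↦ vonMangoldt.residueClass_le a k
      _ ≤ (log 4 + 4) * n := psi_le_const_mul_self n.cast_nonneg
  · simp [vonMangoldt.eqOn_LFunctionResidueClassAux ha hs]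

theorem isEquivalent_psi : ψ ~[atTop] id := by
  have hΛ (n : ℕ) : vonMangoldt.residueClass (1 : ZMod 1) n = vonMangoldt n := by
    simp [vonMangoldt.residueClass, Subsingleton.elim _ (1 : ZMod 1)]
  refine isEquivalent_of_tendsto_one ?_
  simpa [hΛ, psi, Pi.div_def, ← Finset.Icc_add_one_left_eq_Ioc] using!
    tendsto_sum_residueClass_div (isUnit_one (M := ZMod 1))

theorem isEquivalent_theta : θ ~[atTop] id := by
  have hsqrt : sqrt =o[atTop] (id : ℝ → ℝ) := by
    refine (isLittleO_iff_tendsto' (.of_forall fun x (hx : x = 0) ↦ by simp [hx])).2 ?_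
    simpa only [id_eq, sqrt_div_self', one_div] using! tendsto_sqrt_atTop.inv_tendsto_atTop
  simpa using! isEquivalent_psi.sub_isLittleO (isBigO_psi_sub_theta_sqrt.trans_isLittleO hsqrt)

theorem isEquivalent_primeCounting :
    (fun x : ℝ ↦ (Nat.primeCounting ⌊x⌋₊ : ℝ)) ~[atTop] fun x ↦ x / log x := by
  have hθ : (fun x ↦ θ x / log x) ~[atTop] fun x ↦ x / log x :=
    isEquivalent_theta.div .refl
  refine (hθ.add_isLittleO integral_theta_div_log_sq_isLittleO).congr_left ?_
  filter_upwards [eventually_ge_atTop 2] with x hx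
  exact (primeCounting_eq_theta_div_log_add_integral hx).symm

lemma tendsto_div_log_atTop : Tendsto (fun x : ℝ ↦ x / log x) atTop atTop := by
  have hpos : ∀ᶠ x : ℝ in atTop, log x / x ∈ Ioi 0 := by
    filter_upwards [eventually_gt_atTop 1] with x hx
    exact div_pos (log_pos hx) (by positivity)
  simpa only [Pi.inv_def, inv_div, id_eq] using
    (tendsto_nhdsWithin_iff.2
      ⟨isLittleO_log_id_atTop.tendsto_div_nhds_zero, hpos⟩).inv_tendsto_nhdsGT_zero

lemma isEquivalent_log_div_log : (fun x ↦ log (x / log x)) ~[atTop] log := by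
  have hloglog : (fun x ↦ log (log x)) =o[atTop] log :=
    isLittleO_log_id_atTop.comp_tendsto tendsto_log_atTop
  refine (IsEquivalent.refl.sub_isLittleO hloglog).congr_left ?_
  filter_upwards [eventually_gt_atTop 1] with x hx
  exact (log_div (by positivity) (log_pos hx).ne').symm

lemma isEquivalent_mul_log_of_isEquivalent_div_log {ι : Type*} {l : Filter ι} {a p : ι → ℝ}
    (hp : Tendsto p l atTop) (h : a ~[l] fun i ↦ p i / log (p i)) :
    p ~[l] fun i ↦ a i * log (a i) := by
  have hlog : (fun i ↦ log (a i)) ~[l] fun i ↦ log (p i) :=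
    (h.log (tendsto_div_log_atTop.comp hp)).trans (isEquivalent_log_div_log.comp_tendsto hp)
  refine ((h.mul hlog).congr_right ?_).symm
  filter_upwards [(tendsto_log_atTop.comp hp).eventually_gt_atTop 0] with i hi
  exact div_mul_cancel₀ _ (ne_of_gt hi)

lemma primeCounting_nth_prime (n : ℕ) : Nat.primeCounting (Nat.nth Nat.Prime n) = n + 1 := by
  rw [Nat.primeCounting, Nat.primeCounting', Nat.count_succ, ← Nat.primeCounting',
    Nat.primeCounting'_nth_eq, if_pos (Nat.prime_nth_prime n)]

lemma tendsto_nth_prime : Tendsto (fun n : ℕ ↦ (Nat.nth Nat.Prime n : ℝ)) atTop atTop :=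
  tendsto_natCast_atTop_atTop.comp
    (Nat.nth_strictMono Nat.infinite_setOfPred_prime).tendsto_atTop

theorem isEquivalent_nth_prime :
    (fun n : ℕ ↦ (Nat.nth Nat.Prime n : ℝ)) ~[atTop] fun n ↦ n * log n := by
  refine isEquivalent_mul_log_of_isEquivalent_div_log tendsto_nth_prime ?_
  have hsucc : (fun n : ℕ ↦ (n : ℝ)) ~[atTop] fun n ↦ ((n + 1 : ℕ) : ℝ) := by
    refine isEquivalent_of_tendsto_one ?_
    simpa [Pi.div_def] using tendsto_natCast_div_add_atTop (1 : ℝ)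
  refine hsucc.trans ?_
  simpa [Function.comp_def, primeCounting_nth_prime] using
    isEquivalent_primeCounting.comp_tendsto tendsto_nth_prime

end Primes

end PrimeNumberTheorem

theorem nth_prime_asymp :
    Tendsto (fun n : ℕ => (Nat.nth Nat.Prime n : ℝ) / (n * Real.log n))
      atTop (nhds 1) := by
  refine (Asymptotics.isEquivalent_iff_tendsto_one ?_).1 PrimeNumberTheorem.isEquivalent_nth_prime
  filter_upwards [eventually_gt_atTop 1] with n hn
  have hlog : 0 < Real.log n := Real.log_pos (by exact_mod_cast hn)
  positivity
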